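/- If an operator J on partial functions is uniformly inflationary (f ≤subT J(f) via a fixed index), uniformly monotone, and uniformly conservative (J(f) ≡subT f′ for total f, with uniform indices), then f <subT J(f) for every partial function f that extends to a total hyperarithmetical (Δ¹₁) function; indeed J(f) ≡subT f implies ∅^(α) <subT f for every computable ordinal α. -/

import Mathlib

open Classical

noncomputable section

/-- `as` is a valid answer history for the sequential oracle computation of `Φ`
with oracle `g` on input `n`: at each round `k`, the machine outputs a query
`(false, q)` with `q` in the domain of `g`, answered by `g q = as[k]`. -/
def ValidHist (Φ : List ℕ →. Bool × ℕ) (g : ℕ →. ℕ) (n : ℕ) (as : List ℕ) : Prop :=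
  ∀ (k : ℕ) (hk : k < as.length), ∃ q : ℕ,
    (false, q) ∈ Φ (n :: as.take k) ∧ (as[k]'hk) ∈ g q

/-- The sequential oracle computation `Φ[g](n)` halts with output `m`. -/
def HaltsTo (Φ : List ℕ →. Bool × ℕ) (g : ℕ →. ℕ) (n m : ℕ) : Prop :=
  ∃ as : List ℕ, ValidHist Φ g n as ∧ (true, m) ∈ Φ (n :: as)

/-- subTuring reducibility: `f ⊆ Φ[g]` for some partial computable `Φ`. -/
def SubTuringLE (f g : ℕ →. ℕ) : Prop :=
  ∃ Φ : List ℕ →. Bool × ℕ, Partrec Φ ∧ ∀ n m, m ∈ f n → HaltsTo Φ g n m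

/-- subTuring equivalence. -/
def SubTuringEquiv (f g : ℕ →. ℕ) : Prop := SubTuringLE f g ∧ SubTuringLE g f

/-- The `e`-th partial computable function `List ℕ →. Bool × ℕ`,
obtained from the `e`-th partial recursive code. -/
def phi (e : ℕ) : List ℕ →. Bool × ℕ := fun l =>
  ((Denumerable.ofNat Nat.Partrec.Code e).eval (Encodable.encode l)).bind fun k =>
    Part.ofOption (Encodable.decode (α := Bool × ℕ) k)

/-- Reducibility via a specific index: `f ⊆ Φ_c[g]`. -/
def ReducesVia (f g : ℕ →. ℕ) (c : ℕ) : Prop :=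
  ∀ n m, m ∈ f n → HaltsTo (phi c) g n m

/-- The Turing jump of a total function (diagonal halting problem relative to it). -/
def TJump (X : ℕ → ℕ) : ℕ → ℕ := fun e =>
  if (∃ m, HaltsTo (phi e) (X : ℕ →. ℕ) e m) then 1 else 0

/-- Kleene's system of ordinal notations: `1` denotes `0`, `2^a` the successor of `a`,
and `3·5^e` a limit when the `e`-th partial computable function is total with
values that are notations. -/
inductive OrdNotation : ℕ → Type where
  | one : OrdNotation 1
  | succ : ∀ a, OrdNotation a → OrdNotation (2 ^ a)
  | lim : ∀ (e : ℕ) (g : ℕ → ℕ),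
      (∀ n, (Denumerable.ofNat Nat.Partrec.Code e).eval n = Part.some (g n)) →
      (∀ n, OrdNotation (g n)) → OrdNotation (3 * 5 ^ e)

/-- The iterated Turing jump `∅^(a)` along a notation `a`. -/
def Hset : ∀ a : ℕ, OrdNotation a → (ℕ → ℕ)
  | _, .one => fun _ => 0
  | _, .succ _ w => TJump (Hset _ w)
  | _, .lim _ g _ wg => fun p => Hset (g p.unpair.1) (wg p.unpair.1) p.unpair.2

/-- A predicate on `ℕ` is `Σ¹₁` (Kleene normal form `∃X ∀k R(n, X̄k)`). -/
def Sigma11 (S : ℕ → Prop) : Prop :=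
  ∃ R : ℕ → List ℕ → Bool, Computable₂ R ∧
    ∀ n, S n ↔ ∃ X : ℕ → ℕ, ∀ k, R n (List.ofFn fun i : Fin k => X i) = true

/-- A total function is `Δ¹₁` (hyperarithmetical) if its graph is both `Σ¹₁` and `Π¹₁`. -/
def Delta11Fun (h : ℕ → ℕ) : Prop :=
  Sigma11 (fun p => h p.unpair.1 = p.unpair.2) ∧
  Sigma11 (fun p => h p.unpair.1 ≠ p.unpair.2)

/-! ### Indices for oracle machines -/

section indices

open Encodable Nat.Partrec

theorem phi_partrec : Partrec (fun p : ℕ × List ℕ => phi p.1 p.2) := by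
  unfold phi
  refine Partrec.bind ?_ ?_
  · exact Code.eval_part.comp ((Computable.ofNat Code).comp Computable.fst)
      (Computable.encode.comp Computable.snd)
  · exact (Computable.ofOption (Computable.decode.comp Computable.snd)).to₂

theorem phi_comp {α : Type} [Primcodable α] {f : α → ℕ} {g : α → List ℕ} (hf : Computable f)
    (hg : Computable g) : Partrec (fun a => phi (f a) (g a)) :=
  Partrec.comp (f := fun p : ℕ × List ℕ => phi p.1 p.2) (g := fun a => (f a, g a))
    phi_partrec (hf.pair hg)

/-- The s-m-n theorem for oracle machines. -/
theorem smn {α : Type} [Primcodable α] {F : α × List ℕ →. Bool × ℕ} (hF : Partrec F) :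
    ∃ s : α → ℕ, Computable s ∧ ∀ a l, phi (s a) l = F (a, l) := by
  obtain ⟨c, hc⟩ := Code.exists_code.1 hF
  refine ⟨fun a => encode (Code.curry c (encode a)), ?_, ?_⟩
  · exact Computable.encode.comp
      (Code.primrec₂_curry.to_comp.comp (Computable.const c) Computable.encode)
  · intro a l
    unfold phi
    rw [Denumerable.ofNat_encode, Code.eval_curry, hc]
    have : Nat.pair (encode a) (encode l) = encode (a, l) := rfl
    rw [this]
    simp only [encodek, Part.coe_some, Part.bind_some]
    ext ⟨b, o⟩
    cases b <;> simp

theorem exists_index {F : List ℕ →. Bool × ℕ} (hF : Partrec F) : ∃ e, phi e = F := by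
  obtain ⟨s, -, hs⟩ := smn (α := Unit) (F := fun p => F p.2) (hF.comp Computable.snd)
  exact ⟨s (), funext fun l => hs () l⟩

theorem phi_partrec1 (e : ℕ) : Partrec (phi e) :=
  phi_comp (Computable.const e) Computable.id

theorem subTuringLE_iff {f g : ℕ →. ℕ} : SubTuringLE f g ↔ ∃ c, ReducesVia f g c := by
  constructor
  · rintro ⟨F, hF, h⟩
    obtain ⟨e, rfl⟩ := exists_index hF
    exact ⟨e, h⟩
  · rintro ⟨c, h⟩
    exact ⟨phi c, phi_partrec1 c, h⟩

/-- Kleene's recursion theorem, in a convenient form. -/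
theorem rec_thm {α : Type} [Primcodable α] {G : ℕ × α → ℕ} (hG : Computable G) :
    ∃ c : ℕ, ∀ a, (Denumerable.ofNat Code c).eval (encode a) = Part.some (G (c, a)) := by
  let F : Code → ℕ →. ℕ := fun c n =>
    (Part.ofOption (decode (α := α) n)).map fun a => G (encode c, a)
  have hF : Partrec₂ F := by
    refine Partrec.map (Computable.ofOption (Computable.decode.comp Computable.snd)) ?_
    exact hG.comp ((Computable.encode.comp (Computable.fst.comp Computable.fst)).pair
      Computable.snd)
  obtain ⟨c, hc⟩ := Code.fixed_point₂ hF
  refine ⟨encode c, fun a => ?_⟩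
  rw [Denumerable.ofNat_encode, hc]
  simp [F]

end indices

/-! ### Runs of oracle machines -/

inductive Run (F : List ℕ →. Bool × ℕ) (g : ℕ →. ℕ) (n m : ℕ) : List ℕ → Prop
  | done (as : List ℕ) : (true, m) ∈ F (n :: as) → Run F g n m as
  | ask (as : List ℕ) (q b : ℕ) : (false, q) ∈ F (n :: as) → b ∈ g q →
      Run F g n m (as ++ [b]) → Run F g n m as

theorem Run.halts {F : List ℕ →. Bool × ℕ} {g : ℕ →. ℕ} {n m : ℕ} {as : List ℕ}
    (h : Run F g n m as) : ValidHist F g n as → HaltsTo F g n m := by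
  induction h with
  | done as h => exact fun hv => ⟨as, hv, h⟩
  | ask as q b hq hb _ ih =>
    intro hv
    apply ih
    intro k hk
    rw [List.length_append, List.length_singleton] at hk
    rcases Nat.lt_succ_iff_lt_or_eq.1 hk with h | h
    · obtain ⟨q', h1, h2⟩ := hv k h
      refine ⟨q', ?_, ?_⟩
      · rwa [List.take_append_of_le_length h.le]
      · rwa [List.getElem_append_left h]
    · subst h
      refine ⟨q, by simpa using hq, by simpa using hb⟩

theorem HaltsTo.run {F : List ℕ →. Bool × ℕ} {g : ℕ →. ℕ} {n m : ℕ}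
    (h : HaltsTo F g n m) : Run F g n m [] := by
  obtain ⟨as, hv, hd⟩ := h
  have key : ∀ j, j ≤ as.length → Run F g n m (as.take (as.length - j)) := by
    intro j
    induction j with
    | zero => intro _; simpa using Run.done as hd
    | succ j ih =>
      intro hj
      obtain ⟨q, h1, h2⟩ := hv (as.length - (j + 1)) (by omega)
      refine Run.ask _ q _ h1 h2 ?_
      have := ih (by omega)
      rw [List.take_append_getElem]
      convert this using 2
      omega
  simpa using key as.length le_rfl

theorem haltsTo_iff {F : List ℕ →. Bool × ℕ} {g : ℕ →. ℕ} {n m : ℕ} :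
    HaltsTo F g n m ↔ Run F g n m [] :=
  ⟨HaltsTo.run, fun h => h.halts (fun k hk => absurd hk (by simp))⟩

theorem Run.unique {F : List ℕ →. Bool × ℕ} {g : ℕ →. ℕ} {n m m' : ℕ} {as : List ℕ}
    (h : Run F g n m as) : Run F g n m' as → m = m' := by
  induction h with
  | done as h =>
    intro h'
    cases h' with
    | done _ h2 => have := Part.mem_unique h h2; simp at this; exact this
    | ask _ q b hq => have := Part.mem_unique h hq; simp at this
  | ask as q b hq hb _ ih =>
    intro h'
    cases h' with
    | done _ h2 => have := Part.mem_unique hq h2; simp at this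
    | ask _ q' b' hq' hb' h2 =>
      have := Part.mem_unique hq hq'
      simp at this
      subst this
      have := Part.mem_unique hb hb'
      subst this
      exact ih h2

theorem Run.imp {F F' : List ℕ →. Bool × ℕ} {g g' : ℕ →. ℕ} {n n' m : ℕ} {as : List ℕ}
    (h : Run F g n m as) (hF : ∀ as, F (n :: as) = F' (n' :: as))
    (hg : ∀ q b, b ∈ g q → b ∈ g' q) : Run F' g' n' m as := by
  induction h with
  | done as h => exact Run.done as (hF as ▸ h)
  | ask as q b hq hb _ ih => exact Run.ask as q b (hF as ▸ hq) (hg q b hb) ih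

theorem HaltsTo.imp {F F' : List ℕ →. Bool × ℕ} {g g' : ℕ →. ℕ} {n n' m : ℕ}
    (h : HaltsTo F g n m) (hF : ∀ as, F (n :: as) = F' (n' :: as))
    (hg : ∀ q b, b ∈ g q → b ∈ g' q) : HaltsTo F' g' n' m :=
  haltsTo_iff.2 (h.run.imp hF hg)

/-! ### Composition -/

/-- State of the composed machine: `(d, e, n)`, outer history, inner history, remaining answers. -/
abbrev CState : Type := (ℕ × ℕ × ℕ) × List ℕ × List ℕ × List ℕ

def cpost (p : CState × (Bool × ℕ)) : (Bool × ℕ) ⊕ CState :=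
  cond p.2.1 (Sum.inr (p.1.1, p.1.2.1 ++ [p.2.2], [], p.1.2.2.2))
    (List.casesOn p.1.2.2.2 (Sum.inl (false, p.2.2))
      (fun a r => Sum.inr (p.1.1, p.1.2.1, p.1.2.2.1 ++ [a], r)))

theorem cpost_computable : Computable cpost := by
  have s1 : Primrec (fun p : CState × (Bool × ℕ) => p.1.1) := Primrec.fst.comp Primrec.fst
  have s2 : Primrec (fun p : CState × (Bool × ℕ) => p.1.2.1) :=
    Primrec.fst.comp (Primrec.snd.comp Primrec.fst)
  have s3 : Primrec (fun p : CState × (Bool × ℕ) => p.1.2.2.1) :=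
    Primrec.fst.comp (Primrec.snd.comp (Primrec.snd.comp Primrec.fst))
  have s4 : Primrec (fun p : CState × (Bool × ℕ) => p.1.2.2.2) :=
    Primrec.snd.comp (Primrec.snd.comp (Primrec.snd.comp Primrec.fst))
  have s5 : Primrec (fun p : CState × (Bool × ℕ) => p.2.1) := Primrec.fst.comp Primrec.snd
  have s6 : Primrec (fun p : CState × (Bool × ℕ) => p.2.2) := Primrec.snd.comp Primrec.snd
  have t1 : Primrec (fun p : CState × (Bool × ℕ) =>
      (Sum.inr (p.1.1, p.1.2.1 ++ [p.2.2], [], p.1.2.2.2) : (Bool × ℕ) ⊕ CState)) :=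
    Primrec.sumInr.comp
      (s1.pair ((Primrec.list_concat.comp s2 s6).pair ((Primrec.const []).pair s4)))
  have t2 : Primrec (fun p : CState × (Bool × ℕ) =>
      (Sum.inl (false, p.2.2) : (Bool × ℕ) ⊕ CState)) :=
    Primrec.sumInl.comp ((Primrec.const false).pair s6)
  have u1 : Primrec (fun x : (CState × (Bool × ℕ)) × (ℕ × List ℕ) => x.1.1.1) :=
    s1.comp Primrec.fst
  have u2 : Primrec (fun x : (CState × (Bool × ℕ)) × (ℕ × List ℕ) => x.1.1.2.1) :=
    s2.comp Primrec.fst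
  have u3 : Primrec (fun x : (CState × (Bool × ℕ)) × (ℕ × List ℕ) => x.1.1.2.2.1) :=
    s3.comp Primrec.fst
  have u4 : Primrec (fun x : (CState × (Bool × ℕ)) × (ℕ × List ℕ) => x.2.1) :=
    Primrec.fst.comp Primrec.snd
  have u5 : Primrec (fun x : (CState × (Bool × ℕ)) × (ℕ × List ℕ) => x.2.2) :=
    Primrec.snd.comp Primrec.snd
  have u6 : Primrec (fun x : (CState × (Bool × ℕ)) × (ℕ × List ℕ) =>
      x.1.1.2.2.1 ++ [x.2.1]) := Primrec.list_concat.comp u3 u4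
  have t3 : Primrec₂ (fun (p : CState × (Bool × ℕ)) (x : ℕ × List ℕ) =>
      (Sum.inr (p.1.1, p.1.2.1, p.1.2.2.1 ++ [x.1], x.2) : (Bool × ℕ) ⊕ CState)) :=
    Primrec.sumInr.comp (u1.pair (u2.pair (u6.pair u5)))
  exact (Primrec.cond s5 t1 (Primrec.list_casesOn s4 t2 t3)).to_comp

def cstep (s : CState) : Part ((Bool × ℕ) ⊕ CState) :=
  (phi s.1.1 (s.1.2.2 :: s.2.1)).bind fun o =>
    cond o.1 (Part.some (Sum.inl o))
      ((phi s.1.2.1 (o.2 :: s.2.2.1)).bind fun o' => Part.some (cpost (s, o')))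

theorem cstep_partrec : Partrec cstep := by
  have a1 : Computable (fun s : CState => s.1.1) := Computable.fst.comp Computable.fst
  have a2 : Computable (fun s : CState => s.1.2.1) :=
    Computable.fst.comp (Computable.snd.comp Computable.fst)
  have a3 : Computable (fun s : CState => s.1.2.2) :=
    Computable.snd.comp (Computable.snd.comp Computable.fst)
  have a4 : Computable (fun s : CState => s.2.1) := Computable.fst.comp Computable.snd
  have a5 : Computable (fun s : CState => s.2.2.1) :=
    Computable.fst.comp (Computable.snd.comp Computable.snd)
  have b1 : Partrec (fun s : CState => phi s.1.1 (s.1.2.2 :: s.2.1)) :=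
    phi_comp a1 (Computable.list_cons.comp a3 a4)
  have b2 : Computable (fun x : CState × (Bool × ℕ) => x.1.1.2.1) := a2.comp Computable.fst
  have b3 : Computable (fun x : CState × (Bool × ℕ) => x.1.2.2.1) := a5.comp Computable.fst
  have b4 : Computable (fun x : CState × (Bool × ℕ) => x.2.2) :=
    Computable.snd.comp Computable.snd
  have b5 : Partrec (fun x : CState × (Bool × ℕ) => phi x.1.1.2.1 (x.2.2 :: x.1.2.2.1)) :=
    phi_comp b2 (Computable.list_cons.comp b4 b3)
  have b6 : Computable (fun y : (CState × (Bool × ℕ)) × (Bool × ℕ) => cpost (y.1.1, y.2)) :=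
    cpost_computable.comp ((Computable.fst.comp Computable.fst).pair Computable.snd)
  have b7 : Partrec (fun x : CState × (Bool × ℕ) =>
      (phi x.1.1.2.1 (x.2.2 :: x.1.2.2.1)).bind fun o' => Part.some (cpost (x.1, o'))) :=
    Partrec.bind b5 b6.partrec.to₂
  have b8 : Computable (fun x : CState × (Bool × ℕ) => x.2.1) :=
    Computable.fst.comp Computable.snd
  have b9 : Computable (fun x : CState × (Bool × ℕ) => (Sum.inl x.2 : (Bool × ℕ) ⊕ CState)) :=
    Computable.sumInl.comp Computable.snd
  have b10 : Partrec (fun x : CState × (Bool × ℕ) => cond x.2.1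
      (Part.some (Sum.inl x.2 : (Bool × ℕ) ⊕ CState))
      ((phi x.1.1.2.1 (x.2.2 :: x.1.2.2.1)).bind fun o' => Part.some (cpost (x.1, o')))) :=
    Partrec.cond b8 b9.partrec b7
  have b11 : Partrec₂ (fun (s : CState) (o : Bool × ℕ) => cond o.1
      (Part.some (Sum.inl o : (Bool × ℕ) ⊕ CState))
      ((phi s.1.2.1 (o.2 :: s.2.2.1)).bind fun o' => Part.some (cpost (s, o')))) := b10
  exact (Partrec.bind b1 b11).of_eq fun s => rfl

theorem exists_comp : ∃ comp : ℕ × ℕ → ℕ, Computable comp ∧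
    ∀ (f g k : ℕ →. ℕ) (d e : ℕ), ReducesVia f g d → ReducesVia g k e →
      ReducesVia f k (comp (d, e)) := by
  have hF : Partrec (fun p : (ℕ × ℕ) × List ℕ =>
      PFun.fix cstep ((p.1.1, p.1.2, p.2.headI), [], [], p.2.tail)) := by
    refine (Partrec.fix cstep_partrec).comp (Primrec.pair (Primrec.pair ?_
      (Primrec.pair ?_ ?_)) (Primrec.pair ?_ (Primrec.pair ?_ ?_))).to_comp
    · exact Primrec.fst.comp Primrec.fst
    · exact Primrec.snd.comp Primrec.fst
    · exact Primrec.list_headI.comp Primrec.snd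
    · exact Primrec.const _
    · exact Primrec.const _
    · exact Primrec.list_tail.comp Primrec.snd
  obtain ⟨s, hs, hphi⟩ := smn hF
  refine ⟨s, hs, ?_⟩
  intro f g k d e hfg hgk n m hm
  rw [haltsTo_iff]
  have hP : ∀ as, phi (s (d, e)) (n :: as) = PFun.fix cstep ((d, e, n), [], [], as) :=
    fun as => hphi _ _
  have inner : ∀ (bs : List ℕ) (q b : ℕ), (false, q) ∈ phi d (n :: bs) →
      (∀ as, (∀ ext, PFun.fix cstep ((d, e, n), [], [], as ++ ext) =
        PFun.fix cstep ((d, e, n), bs ++ [b], [], ext)) → Run (phi (s (d, e))) k n m as) →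
      ∀ cs, Run (phi e) k q b cs → ∀ as, (∀ ext, PFun.fix cstep ((d, e, n), [], [], as ++ ext) =
        PFun.fix cstep ((d, e, n), bs, cs, ext)) → Run (phi (s (d, e))) k n m as := by
    intro bs q b hq hcont cs hr
    induction hr with
    | done cs h =>
      intro as has
      refine hcont as fun ext => ?_
      rw [has ext]
      apply PFun.fix_fwd_eq
      refine Part.mem_bind hq ?_
      simp only [cond_false]
      refine Part.mem_bind h ?_
      simp [cpost]
    | ask cs r a hr ha _ ih =>
      intro as has
      refine Run.ask as r a ?_ ha (ih _ fun ext => ?_)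
      · rw [hP as]
        have := has []
        rw [List.append_nil] at this
        rw [this]
        refine PFun.mem_fix_iff.2 (Or.inl ?_)
        refine Part.mem_bind hq ?_
        simp only [cond_false]
        refine Part.mem_bind hr ?_
        simp [cpost]
      · rw [List.append_assoc, has]
        apply PFun.fix_fwd_eq
        refine Part.mem_bind hq ?_
        simp only [cond_false]
        refine Part.mem_bind hr ?_
        simp [cpost]
  have outer : ∀ bs, Run (phi d) g n m bs →
      ∀ as, (∀ ext, PFun.fix cstep ((d, e, n), [], [], as ++ ext) =
        PFun.fix cstep ((d, e, n), bs, [], ext)) → Run (phi (s (d, e))) k n m as := by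
    intro bs hr
    induction hr with
    | done bs h =>
      intro as has
      refine Run.done as ?_
      rw [hP as]
      have := has []
      rw [List.append_nil] at this
      rw [this]
      refine PFun.mem_fix_iff.2 (Or.inl ?_)
      refine Part.mem_bind h ?_
      simp
    | ask bs q b hq hb _ ih =>
      intro as has
      exact inner bs q b hq ih [] (hgk q b hb).run as has
  exact outer [] (hfg n m hm).run [] (fun ext => by simp)

theorem SubTuringLE.trans {f g k : ℕ →. ℕ} (h1 : SubTuringLE f g) (h2 : SubTuringLE g k) :
    SubTuringLE f k := by
  rw [subTuringLE_iff] at *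
  obtain ⟨comp, -, hc⟩ := exists_comp
  obtain ⟨d, hd⟩ := h1
  obtain ⟨e, he⟩ := h2
  exact ⟨_, hc f g k d e hd he⟩

/-! ### The jump is strict on total functions -/

theorem not_jump_le (X : ℕ → ℕ) :
    ¬ SubTuringLE ((TJump X : ℕ → ℕ) : ℕ →. ℕ) (X : ℕ →. ℕ) := by
  rintro ⟨F, hF, hred⟩
  have hD : Partrec (fun l : List ℕ => (F l).bind fun o =>
      cond (o.1 && !(o.2 == 0)) Part.none (Part.some o)) := by
    refine Partrec.bind hF (Partrec.cond ?_ Partrec.none Computable.snd.partrec)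
    refine (Primrec.and.comp (Primrec.fst.comp Primrec.snd) (Primrec.not.comp
      (Primrec.beq.comp (Primrec.snd.comp Primrec.snd) (Primrec.const 0)))).to_comp
  obtain ⟨e, he⟩ := exists_index hD
  have hT : HaltsTo F (X : ℕ →. ℕ) e (TJump X e) := hred e _ (by simp)
  by_cases h : ∃ m, HaltsTo (phi e) (X : ℕ →. ℕ) e m
  · have h1 : TJump X e = 1 := if_pos h
    rw [h1] at hT
    obtain ⟨m, hm⟩ := h
    have key : ∀ as, Run (phi e) (X : ℕ →. ℕ) e m as → Run F (X : ℕ →. ℕ) e 0 as := by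
      intro as hr
      induction hr with
      | done as h =>
        rw [he] at h
        obtain ⟨⟨b, o⟩, ho, h⟩ := Part.mem_bind_iff.1 h
        refine Run.done as ?_
        cases b <;> rcases o with _ | o <;> simp at h
        exact ho
      | ask as q b hq hb _ ih =>
        rw [he] at hq
        obtain ⟨⟨b', o⟩, ho, h⟩ := Part.mem_bind_iff.1 hq
        refine Run.ask as q b ?_ hb ih
        cases b' <;> rcases o with _ | o <;> simp at h
        · subst h; exact ho
        · subst h; exact ho
    have := Run.unique hT.run (key _ hm.run)
    simp at this
  · have h1 : TJump X e = 0 := if_neg h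
    rw [h1] at hT
    apply h
    refine ⟨0, ?_⟩
    rw [haltsTo_iff]
    have key : ∀ as, Run F (X : ℕ →. ℕ) e 0 as → Run (phi e) (X : ℕ →. ℕ) e 0 as := by
      intro as hr
      induction hr with
      | done as h =>
        refine Run.done as ?_
        rw [he]
        exact Part.mem_bind h (by simp)
      | ask as q b hq hb _ ih =>
        refine Run.ask as q b ?_ hb ih
        rw [he]
        exact Part.mem_bind hq (by simp)
    exact key _ hT.run

/-! ### Basic machines -/

/-- A machine searching for the least `j` with `D ⟨n, j⟩ = 0`. -/
def srch (p : ℕ × List ℕ) : Bool × ℕ :=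
  cond (p.2.idxOf 0 == p.2.length) (false, Nat.pair p.1 p.2.length) (true, p.2.idxOf 0)

theorem srch_computable : Computable srch := by
  have h1 : Primrec (fun p : ℕ × List ℕ => p.2.idxOf 0) :=
    Primrec.list_idxOf.comp (Primrec.const 0) Primrec.snd
  have h2 : Primrec (fun p : ℕ × List ℕ => p.2.length) := Primrec.list_length.comp Primrec.snd
  exact (Primrec.cond (Primrec.beq.comp h1 h2)
    ((Primrec.const false).pair (Primrec₂.natPair.comp Primrec.fst h2))
    ((Primrec.const true).pair h1)).to_comp

theorem srch_ask {D : ℕ → ℕ} {n k : ℕ} (h : ∀ j < k, D (Nat.pair n j) ≠ 0) :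
    srch (n, (List.range k).map fun j => D (Nat.pair n j)) = (false, Nat.pair n k) := by
  have : (0 : ℕ) ∉ (List.range k).map fun j => D (Nat.pair n j) := by
    simpa using h
  simp [srch, List.idxOf_eq_length this]

theorem srch_halts {D : ℕ → ℕ} {n m x : ℕ} {F : List ℕ →. Bool × ℕ}
    (hF : ∀ as, F (x :: as) = Part.some (srch (n, as))) (hm : D (Nat.pair n m) = 0)
    (hlt : ∀ j < m, D (Nat.pair n j) ≠ 0) : HaltsTo F (D : ℕ →. ℕ) x m := by
  refine ⟨(List.range (m + 1)).map fun j => D (Nat.pair n j), ?_, ?_⟩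
  · intro k hk
    simp only [List.length_map, List.length_range] at hk
    refine ⟨Nat.pair n k, ?_, by simp⟩
    rw [hF, ← List.map_take, List.take_range, min_eq_left hk.le, srch_ask]
    · simp
    · exact fun j hj => hlt j (by omega)
  · rw [hF, List.range_succ, List.map_append]
    have : (0 : ℕ) ∉ (List.range m).map fun j => D (Nat.pair n j) := by
      simpa using hlt
    have hne : (m == m + 1) = false := by simp
    simp [srch, List.idxOf_append_of_notMem this, hm, hne]

theorem srch_exists {D : ℕ → ℕ} {n m x : ℕ} {F : List ℕ →. Bool × ℕ}
    (hF : ∀ as, F (x :: as) = Part.some (srch (n, as))) (h : HaltsTo F (D : ℕ →. ℕ) x m) :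
    ∃ j, D (Nat.pair n j) = 0 := by
  have key : ∀ as, Run F (D : ℕ →. ℕ) x m as →
      ∀ k, as = (List.range k).map (fun j => D (Nat.pair n j)) → ∃ j, D (Nat.pair n j) = 0 := by
    intro as hr
    induction hr with
    | done as h =>
      intro k hk
      by_contra! hcon
      rw [hF, hk, srch_ask fun j _ => hcon j] at h
      simp at h
    | ask as q b hq hb _ ih =>
      intro k hk
      by_contra! hcon
      rw [hF, hk, srch_ask fun j _ => hcon j] at hq
      simp at hq
      refine absurd (ih (k + 1) ?_) (by push Not; exact hcon)
      simp at hb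
      rw [List.range_succ, List.map_append, hk, hb, hq]
      simp
  exact key [] h.run 0 rfl

/-- `ExZ D n = 1` iff `∃ j, D ⟨n, j⟩ = 0`. -/
def ExZ (D : ℕ → ℕ) : ℕ → ℕ := fun n => if ∃ j, D (Nat.pair n j) = 0 then 1 else 0

theorem exZ_red : ∃ k : ℕ, ∀ D : ℕ → ℕ,
    ReducesVia ((ExZ D : ℕ → ℕ) : ℕ →. ℕ) ((TJump D : ℕ → ℕ) : ℕ →. ℕ) k := by
  obtain ⟨s, hs, hphi⟩ := smn (α := ℕ) (F := fun p => Part.some (srch (p.1, p.2.tail)))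
    (srch_computable.comp (Computable.fst.pair
      (Primrec.list_tail.to_comp.comp Computable.snd))).partrec
  have hM : Computable (fun l : List ℕ =>
      cond (l.tail.length == 0) (false, s l.headI) (true, l.tail.headI)) := by
    refine Computable.cond ?_ ?_ ?_
    · exact (Primrec.beq.comp (Primrec.list_length.comp Primrec.list_tail)
        (Primrec.const 0)).to_comp
    · exact (Computable.const false).pair (hs.comp Primrec.list_headI.to_comp)
    · exact (Computable.const true).pair (Primrec.list_headI.comp Primrec.list_tail).to_comp
  obtain ⟨k, hk⟩ := exists_index hM.partrec
  refine ⟨k, fun D n m hm => ?_⟩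
  have hphi' : ∀ as, phi (s n) (s n :: as) = Part.some (srch (n, as)) := fun as => hphi _ _
  have hT : TJump D (s n) = ExZ D n := by
    unfold TJump ExZ
    congr 1
    apply propext
    constructor
    · rintro ⟨m, h⟩
      exact srch_exists hphi' h
    · intro h
      exact ⟨_, srch_halts hphi' (Nat.find_spec h) fun j hj => Nat.find_min h hj⟩
  simp at hm
  subst hm
  rw [haltsTo_iff]
  refine Run.ask [] (s n) (ExZ D n) ?_ ?_ (Run.done _ ?_)
  · rw [hk]; simp
  · simp [hT]
  · rw [hk]; simp

theorem const_index (v : ℕ) : ∃ k : ℕ, ∀ f : ℕ →. ℕ,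
    ReducesVia (((fun _ => v) : ℕ → ℕ) : ℕ →. ℕ) f k := by
  obtain ⟨k, hk⟩ := exists_index (F := fun _ => Part.some (true, v))
    (Computable.const (true, v)).partrec
  refine ⟨k, fun f n m hm => ?_⟩
  simp at hm
  subst hm
  rw [haltsTo_iff]
  refine Run.done _ ?_
  rw [hk]; simp

/-- A machine that first selects an index and a new input, and then runs that index. -/
theorem deleg {α : Type} [Primcodable α] {sel : α × ℕ →. ℕ × ℕ} (hsel : Partrec sel) :
    ∃ s : α → ℕ, Computable s ∧ ∀ a n d n', (d, n') ∈ sel (a, n) → ∀ (g : ℕ →. ℕ) m,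
      HaltsTo (phi d) g n' m → HaltsTo (phi (s a)) g n m := by
  have hF : Partrec (fun p : α × List ℕ => (sel (p.1, p.2.headI)).bind fun o =>
      phi o.1 (o.2 :: p.2.tail)) := by
    refine Partrec.bind (hsel.comp (Computable.fst.pair
      (Primrec.list_headI.to_comp.comp Computable.snd))) ?_
    have h1 : Computable (fun x : (α × List ℕ) × (ℕ × ℕ) => x.2.1) :=
      Computable.fst.comp Computable.snd
    have h2 : Computable (fun x : (α × List ℕ) × (ℕ × ℕ) => x.2.2 :: x.1.2.tail) :=
      Computable.list_cons.comp (Computable.snd.comp Computable.snd)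
        (Primrec.list_tail.to_comp.comp (Computable.snd.comp Computable.fst))
    exact phi_comp h1 h2
  obtain ⟨s, hs, hphi⟩ := smn hF
  refine ⟨s, hs, ?_⟩
  intro a n d n' hd g m h
  refine h.imp (fun as => ?_) (fun _ _ h => h)
  rw [hphi, Part.eq_some_iff.2 (show (d, n') ∈ sel (a, (n :: as).headI) from hd)]
  simp

/-! ### Closure of fixed points under the jump -/

theorem jump_index {J : (ℕ →. ℕ) → (ℕ →. ℕ)}
    (hmono : ∃ u : ℕ → ℕ, Computable u ∧
      ∀ (f g : ℕ →. ℕ) (d : ℕ), ReducesVia f g d → ReducesVia (J f) (J g) (u d))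
    (hcons : ∃ c₁ c₂ : ℕ, ∀ f : ℕ → ℕ,
      ReducesVia (J (f : ℕ →. ℕ)) ((TJump f : ℕ → ℕ) : ℕ →. ℕ) c₁ ∧
      ReducesVia ((TJump f : ℕ → ℕ) : ℕ →. ℕ) (J (f : ℕ →. ℕ)) c₂)
    {f : ℕ →. ℕ} (hf : SubTuringLE (J f) f) :
    ∃ q : ℕ → ℕ, Computable q ∧ ∀ (D : ℕ → ℕ) d, ReducesVia (D : ℕ →. ℕ) f d →
      ReducesVia ((TJump D : ℕ → ℕ) : ℕ →. ℕ) f (q d) := by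
  obtain ⟨u, hu, hu'⟩ := hmono
  obtain ⟨c₁, c₂, hc⟩ := hcons
  obtain ⟨e, he⟩ := subTuringLE_iff.1 hf
  obtain ⟨comp, hcomp, hcomp'⟩ := exists_comp
  refine ⟨fun d => comp (c₂, comp (u d, e)), ?_, ?_⟩
  · exact hcomp.comp ((Computable.const c₂).pair (hcomp.comp (hu.pair (Computable.const e))))
  · intro D d hd
    exact hcomp' _ _ _ _ _ (hc D).2 (hcomp' _ _ _ _ _ (hu' _ _ _ hd) he)

theorem exZ_index {f : ℕ →. ℕ} (hf : ∃ q : ℕ → ℕ, Computable q ∧ ∀ (D : ℕ → ℕ) d,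
      ReducesVia (D : ℕ →. ℕ) f d → ReducesVia ((TJump D : ℕ → ℕ) : ℕ →. ℕ) f (q d)) :
    ∃ q : ℕ → ℕ, Computable q ∧ ∀ (D : ℕ → ℕ) d, ReducesVia (D : ℕ →. ℕ) f d →
      ReducesVia ((ExZ D : ℕ → ℕ) : ℕ →. ℕ) f (q d) := by
  obtain ⟨q, hq, hq'⟩ := hf
  obtain ⟨k, hk⟩ := exZ_red
  obtain ⟨comp, hcomp, hcomp'⟩ := exists_comp
  refine ⟨fun d => comp (k, q d), hcomp.comp ((Computable.const k).pair hq), ?_⟩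
  intro D d hd
  exact hcomp' _ _ _ _ _ (hk D) (hq' D d hd)

/-! ### The hierarchy along ordinal notations -/

theorem pow_primrec (b : ℕ) : Primrec (fun n : ℕ => b ^ n) := by
  refine (Primrec.nat_rec₁ 1 (f := fun _ r => r * b)
    (Primrec.nat_mul.comp Primrec.snd (Primrec.const b))).of_eq fun n => ?_
  induction n with
  | zero => rfl
  | succ n ih => simp only [pow_succ, ← ih]

def dec2 (a : ℕ) : ℕ := a.findGreatest fun b => 2 ^ b = a
def dec5 (a : ℕ) : ℕ := a.findGreatest fun b => 3 * 5 ^ b = a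

theorem dec2_computable : Computable dec2 :=
  (Primrec.nat_findGreatest Primrec.id (p := fun a b => 2 ^ b = a)
    (Primrec.eq.comp ((pow_primrec 2).comp Primrec.snd) Primrec.fst)).to_comp

theorem dec5_computable : Computable dec5 :=
  (Primrec.nat_findGreatest Primrec.id (p := fun a b => 3 * 5 ^ b = a)
    (Primrec.eq.comp (Primrec.nat_mul.comp (Primrec.const 3)
      ((pow_primrec 5).comp Primrec.snd)) Primrec.fst)).to_comp

theorem dec2_pow (b : ℕ) : dec2 (2 ^ b) = b := by
  have h : 2 ^ dec2 (2 ^ b) = 2 ^ b :=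
    Nat.findGreatest_spec (P := fun c => 2 ^ c = 2 ^ b) (Nat.lt_two_pow_self).le rfl
  exact Nat.pow_right_injective le_rfl h

theorem dec5_pow (b : ℕ) : dec5 (3 * 5 ^ b) = b := by
  have hb : b ≤ 3 * 5 ^ b := by
    have : b < 5 ^ b := Nat.lt_pow_self (by norm_num)
    omega
  have h : 3 * 5 ^ dec5 (3 * 5 ^ b) = 3 * 5 ^ b :=
    Nat.findGreatest_spec (P := fun c => 3 * 5 ^ c = 3 * 5 ^ b) hb rfl
  exact Nat.pow_right_injective (a := 5) (by norm_num) (Nat.eq_of_mul_eq_mul_left (by norm_num) h)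

theorem lim_ne_pow (e b : ℕ) : 2 ^ b ≠ 3 * 5 ^ e := by
  intro h
  have h3 : 3 ∣ 2 ^ b := h ▸ dvd_mul_right _ _
  have := Nat.prime_three.dvd_of_dvd_pow h3
  omega

theorem ord_index_ne_zero : ∀ {a : ℕ}, OrdNotation a → a ≠ 0 := by
  intro a w
  cases w with
  | one => simp
  | succ b _ => simp
  | lim e g _ _ => simp

theorem hset_le {f : ℕ →. ℕ} (hf : ∃ q : ℕ → ℕ, Computable q ∧ ∀ (D : ℕ → ℕ) d,
      ReducesVia (D : ℕ →. ℕ) f d → ReducesVia ((TJump D : ℕ → ℕ) : ℕ →. ℕ) f (q d))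
    (a : ℕ) (w : OrdNotation a) : SubTuringLE ((Hset a w : ℕ → ℕ) : ℕ →. ℕ) f := by
  obtain ⟨q, hq, hq'⟩ := hf
  obtain ⟨k0, hk0⟩ := const_index 0
  have ev : Partrec₂ (fun c n => (Denumerable.ofNat Nat.Partrec.Code c).eval n) :=
    Nat.Partrec.Code.eval_part.comp ((Computable.ofNat _).comp Computable.fst) Computable.snd
  obtain ⟨s1, hs1, hs1'⟩ := deleg (α := ℕ × ℕ) (sel := fun x =>
    ((Denumerable.ofNat Nat.Partrec.Code x.1.1).eval x.1.2).map fun d => (d, x.2))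
    (Partrec.map (ev.comp (Computable.fst.comp Computable.fst)
      (Computable.snd.comp Computable.fst))
      (Computable.snd.pair (Computable.snd.comp Computable.fst)).to₂)
  obtain ⟨s2, hs2, hs2'⟩ := deleg (α := ℕ × ℕ) (sel := fun x =>
    ((Denumerable.ofNat Nat.Partrec.Code x.1.2).eval x.2.unpair.1).bind fun g =>
      ((Denumerable.ofNat Nat.Partrec.Code x.1.1).eval g).map fun d => (d, x.2.unpair.2)) (by
    have c1 : Computable (fun x : (ℕ × ℕ) × ℕ => x.1.2) := Computable.snd.comp Computable.fst
    have c2 : Computable (fun x : (ℕ × ℕ) × ℕ => x.2.unpair.1) :=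
      Computable.fst.comp (Computable.unpair.comp Computable.snd)
    have c3 : Computable (fun x : ((ℕ × ℕ) × ℕ) × ℕ => x.1.1.1) :=
      Computable.fst.comp (Computable.fst.comp Computable.fst)
    have c4 : Computable (fun x : (((ℕ × ℕ) × ℕ) × ℕ) × ℕ => (x.2, x.1.1.2.unpair.2)) :=
      Computable.snd.pair (Computable.snd.comp (Computable.unpair.comp
        (Computable.snd.comp (Computable.fst.comp Computable.fst))))
    exact Partrec.bind (ev.comp c1 c2) (Partrec.map (ev.comp c3 Computable.snd) c4.to₂).to₂)
  let G : ℕ × ℕ → ℕ := fun x => cond (x.2 == 1) k0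
    (cond (2 ^ dec2 x.2 == x.2) (q (s1 (x.1, dec2 x.2))) (s2 (x.1, dec5 x.2)))
  have hG : Computable G := by
    refine Computable.cond ?_ (Computable.const _) (Computable.cond ?_ ?_ ?_)
    · exact (Primrec.beq.comp Primrec.snd (Primrec.const 1)).to_comp
    · exact Primrec.beq.to_comp.comp ((pow_primrec 2).to_comp.comp
        (dec2_computable.comp Computable.snd)) Computable.snd
    · exact hq.comp (hs1.comp (Computable.fst.pair (dec2_computable.comp Computable.snd)))
    · exact hs2.comp (Computable.fst.pair (dec5_computable.comp Computable.snd))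
  obtain ⟨c, hc⟩ := rec_thm hG
  simp only [Encodable.encode_nat] at hc
  suffices h : ReducesVia ((Hset a w : ℕ → ℕ) : ℕ →. ℕ) f (G (c, a)) from
    subTuringLE_iff.2 ⟨_, h⟩
  induction w with
  | one => simpa [G, Hset] using hk0 f
  | succ b w ih =>
    have hb := ord_index_ne_zero w
    have h1 : (2 ^ b == 1) = false := by simp [hb]
    have : G (c, 2 ^ b) = q (s1 (c, b)) := by simp [G, dec2_pow, h1]
    rw [this]
    refine hq' _ _ fun n m hm => ?_
    exact hs1' (c, b) n (G (c, b)) n (by simp [hc]) f m (ih n m hm)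
  | lim e g hg w ih =>
    have h1 : (3 * 5 ^ e == 1) = false := beq_eq_false_iff_ne.2 (by omega)
    have h2 : (2 ^ dec2 (3 * 5 ^ e) == 3 * 5 ^ e) = false :=
      beq_eq_false_iff_ne.2 (lim_ne_pow e _)
    have : G (c, 3 * 5 ^ e) = s2 (c, e) := by
      simp only [G, dec5_pow, h1, h2, cond_false]
    rw [this]
    intro n m hm
    refine hs2' (c, e) n (G (c, g n.unpair.1)) n.unpair.2 (by simp [hg, hc]) f m ?_
    exact ih n.unpair.1 n.unpair.2 m hm

/-! ### Bar recursion on the tree of attempts -/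

inductive Win (A B : List ℕ → Bool) : List ℕ → List ℕ → Prop
  | halt (l r : List ℕ) : A l = true → B r = false → Win A B l r
  | step (l r : List ℕ) (i : ℕ) : A l = true → B r = true →
      (∀ j, Win A B (l ++ [i]) (r ++ [j])) → Win A B l r

inductive Bar (A B : List ℕ → Bool) : List ℕ → List ℕ → Prop
  | halt (l r : List ℕ) : ¬ (A l = true ∧ B r = true) → Bar A B l r
  | step (l r : List ℕ) : (∀ i j, Bar A B (l ++ [i]) (r ++ [j])) → Bar A B l r

theorem ofFn_succ_concat (X : ℕ → ℕ) (k : ℕ) :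
    (List.ofFn fun i : Fin (k + 1) => X i) = (List.ofFn fun i : Fin k => X i) ++ [X k] := by
  rw [List.ofFn_succ_last]
  simp

theorem bar_of_no_paths {A B : List ℕ → Bool}
    (h : ∀ X Y : ℕ → ℕ, (∀ k, A (List.ofFn fun i : Fin k => X i) = true) →
      (∀ k, B (List.ofFn fun i : Fin k => Y i) = true) → False) : Bar A B [] [] := by
  by_contra hcon
  have hstep : ∀ p : {p : List ℕ × List ℕ // ¬ Bar A B p.1 p.2}, ∃ ij : ℕ × ℕ,
      ¬ Bar A B (p.1.1 ++ [ij.1]) (p.1.2 ++ [ij.2]) := by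
    rintro ⟨⟨l, r⟩, hp⟩
    by_contra! hh
    exact hp (Bar.step l r fun i j => hh (i, j))
  choose nx hnx using hstep
  let S : ℕ → {p : List ℕ × List ℕ // ¬ Bar A B p.1 p.2} := fun n =>
    Nat.rec ⟨([], []), hcon⟩
      (fun _ p => ⟨(p.1.1 ++ [(nx p).1], p.1.2 ++ [(nx p).2]), hnx p⟩) n
  have hS : ∀ k, (S k).1 = (List.ofFn fun i : Fin k => (nx (S i)).1,
      List.ofFn fun i : Fin k => (nx (S i)).2) := by
    intro k
    induction k with
    | zero => simp [S]
    | succ k ih =>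
      rw [ofFn_succ_concat (fun i => (nx (S i)).1), ofFn_succ_concat (fun i => (nx (S i)).2)]
      have : (S (k + 1)).1 = ((S k).1.1 ++ [(nx (S k)).1], (S k).1.2 ++ [(nx (S k)).2]) := rfl
      rw [this, ih]
  have hAB : ∀ k, A (S k).1.1 = true ∧ B (S k).1.2 = true := by
    intro k
    by_contra hh
    exact (S k).2 (Bar.halt _ _ hh)
  refine h (fun i => (nx (S i)).1) (fun i => (nx (S i)).2) (fun k => ?_) (fun k => ?_)
  · have := (hAB k).1
    rwa [hS k] at this
  · have := (hAB k).2
    rwa [hS k] at this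

theorem win_of_path {A B : List ℕ → Bool} {X : ℕ → ℕ}
    (hX : ∀ k, A (List.ofFn fun i : Fin k => X i) = true) {l r : List ℕ} (hb : Bar A B l r) :
    ∀ k, l = (List.ofFn fun i : Fin k => X i) → Win A B l r := by
  induction hb with
  | halt l r h =>
    intro k hk
    have hA : A l = true := hk ▸ hX k
    refine Win.halt l r hA ?_
    by_contra hB
    exact h ⟨hA, by simpa using hB⟩
  | step l r _ ih =>
    intro k hk
    have hA : A l = true := hk ▸ hX k
    cases hB : B r with
    | false => exact Win.halt l r hA hB
    | true =>
      refine Win.step l r (X k) hA hB fun j => ih (X k) j (k + 1) ?_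
      rw [ofFn_succ_concat, hk]

theorem not_win_of_path {A B : List ℕ → Bool} {Y : ℕ → ℕ}
    (hY : ∀ k, B (List.ofFn fun i : Fin k => Y i) = true) {l r : List ℕ} (hw : Win A B l r) :
    ∀ k, r ≠ (List.ofFn fun i : Fin k => Y i) := by
  induction hw with
  | halt l r hA hB =>
    intro k hk
    rw [hk, hY k] at hB
    simp at hB
  | step l r i hA hB _ ih =>
    intro k hk
    exact ih (Y k) (k + 1) (by rw [ofFn_succ_concat, hk])

def wval (A B : List ℕ → Bool) (l r : List ℕ) : ℕ := if Win A B l r then 1 else 0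

theorem wval_step {A B : List ℕ → Bool} {l r : List ℕ} (hA : A l = true) (hB : B r = true) (n : ℕ) :
    ExZ (ExZ fun p => wval A B (l ++ [p.unpair.1.unpair.2]) (r ++ [p.unpair.2])) n =
      wval A B l r := by
  unfold ExZ
  rw [wval]
  congr 1
  apply propext
  simp only [Nat.unpair_pair, wval]
  constructor
  · rintro ⟨i, hi⟩
    refine Win.step l r i hA hB fun j => ?_
    by_contra hw
    rw [if_pos ⟨j, if_neg hw⟩] at hi
    simp at hi
  · intro hw
    cases hw with
    | halt _ _ _ h => rw [hB] at h; simp at h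
    | step _ _ i _ _ h =>
      refine ⟨i, if_neg ?_⟩
      rintro ⟨j, hj⟩
      rw [if_pos (h j)] at hj
      simp at hj

theorem delta_le {f : ℕ →. ℕ} (hf : ∃ q : ℕ → ℕ, Computable q ∧ ∀ (D : ℕ → ℕ) d,
      ReducesVia (D : ℕ →. ℕ) f d → ReducesVia ((TJump D : ℕ → ℕ) : ℕ →. ℕ) f (q d))
    {h : ℕ → ℕ} (hh : Delta11Fun h) : SubTuringLE (h : ℕ →. ℕ) f := by
  obtain ⟨q, hq, hq'⟩ := exZ_index hf
  obtain ⟨⟨B, hB, hB'⟩, ⟨A, hA, hA'⟩⟩ := hh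
  obtain ⟨k0, hk0⟩ := const_index 0
  obtain ⟨k1, hk1⟩ := const_index 1
  have ev : Partrec₂ (fun c n => (Denumerable.ofNat Nat.Partrec.Code c).eval n) :=
    Nat.Partrec.Code.eval_part.comp ((Computable.ofNat _).comp Computable.fst) Computable.snd
  obtain ⟨s3, hs3, hs3'⟩ := deleg (α := ℕ × ℕ × List ℕ × List ℕ) (sel := fun x =>
    ((Denumerable.ofNat Nat.Partrec.Code x.1.1).eval (Encodable.encode
      (x.1.2.1, x.1.2.2.1 ++ [x.2.unpair.1.unpair.2], x.1.2.2.2 ++ [x.2.unpair.2]))).map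
      fun d => (d, x.2)) (by
    have c1 : Primrec (fun x : (ℕ × ℕ × List ℕ × List ℕ) × ℕ => x.1.1) :=
      Primrec.fst.comp Primrec.fst
    have c2 : Primrec (fun x : (ℕ × ℕ × List ℕ × List ℕ) × ℕ => x.1.2.1) :=
      Primrec.fst.comp (Primrec.snd.comp Primrec.fst)
    have c3 : Primrec (fun x : (ℕ × ℕ × List ℕ × List ℕ) × ℕ => x.1.2.2.1) :=
      Primrec.fst.comp (Primrec.snd.comp (Primrec.snd.comp Primrec.fst))
    have c4 : Primrec (fun x : (ℕ × ℕ × List ℕ × List ℕ) × ℕ => x.1.2.2.2) :=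
      Primrec.snd.comp (Primrec.snd.comp (Primrec.snd.comp Primrec.fst))
    have c5 : Primrec (fun x : (ℕ × ℕ × List ℕ × List ℕ) × ℕ => x.2.unpair.1.unpair.2) :=
      Primrec.snd.comp (Primrec.unpair.comp (Primrec.fst.comp
        (Primrec.unpair.comp Primrec.snd)))
    have c6 : Primrec (fun x : (ℕ × ℕ × List ℕ × List ℕ) × ℕ => x.2.unpair.2) :=
      Primrec.snd.comp (Primrec.unpair.comp Primrec.snd)
    have c7 : Computable (fun x : (ℕ × ℕ × List ℕ × List ℕ) × ℕ => Encodable.encode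
      (x.1.2.1, x.1.2.2.1 ++ [x.2.unpair.1.unpair.2], x.1.2.2.2 ++ [x.2.unpair.2])) :=
      Computable.encode.comp (c2.pair ((Primrec.list_concat.comp c3 c5).pair
        (Primrec.list_concat.comp c4 c6))).to_comp
    have c8 : Computable (fun x : ((ℕ × ℕ × List ℕ × List ℕ) × ℕ) × ℕ => (x.2, x.1.2)) :=
      Computable.snd.pair (Computable.snd.comp Computable.fst)
    exact Partrec.map (ev.comp c1.to_comp c7) c8.to₂)
  obtain ⟨s4, hs4, hs4'⟩ := deleg (α := ℕ) (sel := fun x =>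
    ((Denumerable.ofNat Nat.Partrec.Code x.1).eval (Encodable.encode
      (x.2, ([] : List ℕ), ([] : List ℕ)))).map fun d => (d, x.2)) (by
    have c7 : Computable (fun x : ℕ × ℕ => Encodable.encode
      (x.2, ([] : List ℕ), ([] : List ℕ))) :=
      Computable.encode.comp (Computable.snd.pair (Computable.const _))
    have c8 : Computable (fun x : (ℕ × ℕ) × ℕ => (x.2, x.1.2)) :=
      Computable.snd.pair (Computable.snd.comp Computable.fst)
    exact Partrec.map (ev.comp Computable.fst c7) c8.to₂)
  let G : ℕ × (ℕ × List ℕ × List ℕ) → ℕ := fun x =>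
    cond (A x.2.1 x.2.2.1) (cond (B x.2.1 x.2.2.2) (q (q (s3 x))) k1) k0
  have hG : Computable G := by
    have c1 : Computable (fun x : ℕ × (ℕ × List ℕ × List ℕ) => x.2.1) :=
      Computable.fst.comp Computable.snd
    have c2 : Computable (fun x : ℕ × (ℕ × List ℕ × List ℕ) => x.2.2.1) :=
      Computable.fst.comp (Computable.snd.comp Computable.snd)
    have c3 : Computable (fun x : ℕ × (ℕ × List ℕ × List ℕ) => x.2.2.2) :=
      Computable.snd.comp (Computable.snd.comp Computable.snd)
    exact Computable.cond (hA.comp c1 c2) (Computable.cond (hB.comp c1 c3)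
      (hq.comp (hq.comp hs3)) (Computable.const _)) (Computable.const _)
  obtain ⟨c, hc⟩ := rec_thm hG
  -- the recursion computes the value of the game at every barred node
  have key : ∀ x l r, Bar (A x) (B x) l r →
      ReducesVia (((fun _ => wval (A x) (B x) l r) : ℕ → ℕ) : ℕ →. ℕ) f (G (c, x, l, r)) := by
    intro x l r hbar
    have leaf : ∀ l r, ¬ (A x l = true ∧ B x r = true) →
        ReducesVia (((fun _ => wval (A x) (B x) l r) : ℕ → ℕ) : ℕ →. ℕ) f (G (c, x, l, r)) := by
      intro l r hn
      cases hAl : A x l with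
      | false =>
        have h1 : wval (A x) (B x) l r = 0 := by
          refine if_neg fun hw => ?_
          cases hw <;> simp_all
        have h2 : G (c, x, l, r) = k0 := by simp [G, hAl]
        rw [h1, h2]
        exact hk0 f
      | true =>
        have hBr : B x r = false := by simpa [hAl] using hn
        have h1 : wval (A x) (B x) l r = 1 := if_pos (Win.halt l r hAl hBr)
        have h2 : G (c, x, l, r) = k1 := by simp [G, hAl, hBr]
        rw [h1, h2]
        exact hk1 f
    induction hbar with
    | halt l r hn => exact leaf l r hn
    | step l r _ ih =>
      by_cases hn : A x l = true ∧ B x r = true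
      · have h2 : G (c, x, l, r) = q (q (s3 (c, x, l, r))) := by simp [G, hn.1, hn.2]
        have h1 := funext (wval_step hn.1 hn.2)
        rw [← h1, h2]
        refine hq' _ _ (hq' _ _ fun p m hm => ?_)
        refine hs3' (c, x, l, r) p
          (G (c, x, l ++ [p.unpair.1.unpair.2], r ++ [p.unpair.2])) p
          (by dsimp only; rw [hc]; simp) f m ?_
        exact ih p.unpair.1.unpair.2 p.unpair.2 p m hm
      · exact leaf l r hn
  have hbar : ∀ x, Bar (A x) (B x) [] [] := by
    intro x
    refine bar_of_no_paths fun X Y hX hY => ?_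
    exact (hA' x).2 ⟨X, hX⟩ ((hB' x).2 ⟨Y, hY⟩)
  let V : ℕ → ℕ := fun x => wval (A x) (B x) [] []
  have hV : ReducesVia (V : ℕ →. ℕ) f (s4 c) := by
    intro x m hm
    exact hs4' c x (G (c, x, [], [])) x (by dsimp only; rw [hc]; simp) f m
      (key x [] [] (hbar x) x m hm)
  have hV0 : ∀ x, V x = 0 ↔ h x.unpair.1 = x.unpair.2 := by
    intro x
    constructor
    · intro h0
      by_contra hne
      obtain ⟨X, hX⟩ := (hA' x).1 hne
      have : V x = 1 := if_pos (win_of_path hX (hbar x) 0 rfl)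
      omega
    · intro heq
      obtain ⟨Y, hY⟩ := (hB' x).1 heq
      exact if_neg fun hw => not_win_of_path hY hw 0 rfl
  have hhV : SubTuringLE (h : ℕ →. ℕ) (V : ℕ →. ℕ) := by
    refine ⟨fun l => Part.some (srch (l.headI, l.tail)), ?_, ?_⟩
    · exact (srch_computable.comp
        (Primrec.list_headI.pair Primrec.list_tail).to_comp).partrec
    · intro n m hm
      simp at hm
      subst hm
      refine srch_halts (n := n) (fun as => rfl) ((hV0 _).2 (by simp)) ?_
      intro j hj h0
      have := (hV0 _).1 h0
      simp at this
      omega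
  exact hhV.trans (subTuringLE_iff.2 ⟨_, hV⟩)

theorem jump_strict_on_hyperarithmetical (J : (ℕ →. ℕ) → (ℕ →. ℕ))
    (hinf : ∃ c : ℕ, ∀ f : ℕ →. ℕ, ReducesVia f (J f) c)
    (hmono : ∃ u : ℕ → ℕ, Computable u ∧
      ∀ (f g : ℕ →. ℕ) (d : ℕ), ReducesVia f g d → ReducesVia (J f) (J g) (u d))
    (hcons : ∃ c₁ c₂ : ℕ, ∀ f : ℕ → ℕ,
      ReducesVia (J (f : ℕ →. ℕ)) ((TJump f : ℕ → ℕ) : ℕ →. ℕ) c₁ ∧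
      ReducesVia ((TJump f : ℕ → ℕ) : ℕ →. ℕ) (J (f : ℕ →. ℕ)) c₂) :
    (∀ f : ℕ →. ℕ,
      (∃ h : ℕ → ℕ, Delta11Fun h ∧ ∀ n m, m ∈ f n → m = h n) →
      SubTuringLE f (J f) ∧ ¬ SubTuringLE (J f) f) ∧
    (∀ f : ℕ →. ℕ, SubTuringEquiv (J f) f →
      ∀ (a : ℕ) (w : OrdNotation a),
        SubTuringLE ((Hset a w : ℕ → ℕ) : ℕ →. ℕ) f ∧
        ¬ SubTuringLE f ((Hset a w : ℕ → ℕ) : ℕ →. ℕ)) := by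
  
  refine ⟨?_, ?_⟩
  · rintro f ⟨h, hh, hfh⟩
    refine ⟨?_, fun hJ => ?_⟩
    · obtain ⟨c, hc⟩ := hinf
      exact subTuringLE_iff.2 ⟨c, hc f⟩
    · have hq := jump_index hmono hcons hJ
      obtain ⟨d, hd⟩ := subTuringLE_iff.1 (delta_le hq hh)
      obtain ⟨q, -, hq'⟩ := hq
      refine not_jump_le h (subTuringLE_iff.2 ⟨q d, fun n m hm => ?_⟩)
      refine (hq' h d hd n m hm).imp (fun _ => rfl) fun x b hb => ?_
      simp [hfh x b hb]
  · intro f hf a w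
    have hq := jump_index hmono hcons hf.1
    refine ⟨hset_le hq a w, fun hle => ?_⟩
    exact not_jump_le (Hset a w) ((hset_le hq (2 ^ a) (OrdNotation.succ a w)).trans hle)
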